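/- Let T be a decision tree and let T' be obtained from T by a sequence of subtree raising operations pruning exactly m inner nodes in total. Let v be a node of T that is still a node of T', let P be the path from the root of T to v and P' the path from the root of T' to v. Then the node set of P' is a subset of the node set of P, and every node of P other than v that is not on P' is pruned. For a feature i, call a node w on P other than v a left-cut in feature i if feat(w)=i and the child of w on P is the right child of w, and a right-cut in feature i if feat(w)=i and the child of w on P is the left child of w. For each feature i, let L_i be the number of left-cuts in feature i on P whose threshold is strictly greater than the maximum threshold of a left-cut in feature i on P' (all of them if P' has no left-cut in feature i), and let R_i be the number of right-cuts in feature i on P whose threshold is strictly smaller than the minimum threshold of a right-cut in feature i on P' (all of them if P' has no right-cut in feature i). Then every left-cut and right-cut counted by L_i or R_i is pruned, and in particular Σ_i (L_i + R_i) ≤ m. -/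

import Mathlib

/-- The two class labels. -/
inductive Label where
  | blue
  | red
deriving DecidableEq

/-- A decision tree over examples `ι → ℝ` with classes `{blue, red}`:
every inner node carries a feature and a threshold, every leaf a class label.
An example goes to the left child if its value in the node's feature is at most
the threshold, and to the right child otherwise. -/
inductive DTree (ι : Type) where
  | leaf (c : Label)
  | node (feat : ι) (thr : ℝ) (left right : DTree ι)

namespace DTree

variable {ι : Type}

/-- The class that a decision tree assigns to an example. -/
noncomputable def classify : DTree ι → (ι → ℝ) → Label
  | .leaf c, _ => c
  | .node f t l r, e => if e f ≤ t then l.classify e else r.classify e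

/-- The routing path of an example (`false` = left child, `true` = right child);
it is the position of the leaf of the example. -/
noncomputable def route : DTree ι → (ι → ℝ) → List Bool
  | .leaf _, _ => []
  | .node f t l r, e => if e f ≤ t then false :: l.route e else true :: r.route e

/-- The subtree rooted at a position (`none` if the position is not a node). -/
def subtreeAt : DTree ι → List Bool → Option (DTree ι)
  | T, [] => some T
  | .leaf _, _ :: _ => none
  | .node _ _ l r, b :: p => (if b then r else l).subtreeAt p

/-- Replace the subtree at a given position by another tree. -/
def replaceAt : DTree ι → List Bool → DTree ι → DTree ι
  | _, [], T' => T'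
  | .leaf c, _ :: _, _ => .leaf c
  | .node f t l r, b :: p, T' =>
      if b then .node f t l (r.replaceAt p T') else .node f t (l.replaceAt p T') r

/-- The number of inner nodes of a decision tree. -/
def innerCount : DTree ι → ℕ
  | .leaf _ => 0
  | .node _ _ l r => 1 + l.innerCount + r.innerCount

/-- The position `p` is an inner node of `T`. -/
def IsInnerPos (T : DTree ι) (p : List Bool) : Prop :=
  ∃ f t l r, T.subtreeAt p = some (.node f t l r)

/-- The position `p` is a node of `T`. -/
def IsNodePos (T : DTree ι) (p : List Bool) : Prop :=
  (T.subtreeAt p).isSome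

/-- The feature and threshold of the inner node at position `p`. -/
def cutAt (T : DTree ι) (p : List Bool) : Option (ι × ℝ) :=
  match T.subtreeAt p with
  | some (.node f t _ _) => some (f, t)
  | _ => none

/-- The subtree raising operation at position `q` keeping the child in direction `b`:
the subtree rooted at `q` is replaced by the subtree rooted at its `b`-child; it prunes
the node at `q` together with all inner nodes of the subtree rooted at the other child. -/
def raiseAt (T : DTree ι) (q : List Bool) (b : Bool) : DTree ι :=
  match T.subtreeAt q with
  | some (.node _ _ l r) => T.replaceAt q (if b then r else l)
  | _ => T

end DTree

/-- `E[T,p]`: the examples of `E` whose routing through `T` passes the position `p`. -/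
noncomputable def reach {ι : Type} (E : Finset (ι → ℝ)) (T : DTree ι) (p : List Bool) :
    Finset (ι → ℝ) :=
  E.filter fun e => p <+: T.route e

/-- The number of errors of `T` on the training set `(E, lab)`. -/
noncomputable def errCount {ι : Type} (T : DTree ι) (E : Finset (ι → ℝ))
    (lab : (ι → ℝ) → Label) : ℕ :=
  (E.filter fun e => T.classify e ≠ lab e).card

/-- A most frequent label of the labeled set `(E, lab)` (blue in case of a tie). -/
def majorityLabel {ι : Type} (E : Finset (ι → ℝ)) (lab : (ι → ℝ) → Label) : Label :=
  if (E.filter fun e => lab e = Label.red).card ≤ (E.filter fun e => lab e = Label.blue).card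
  then Label.blue else Label.red

/-- One subtree replacement operation: some inner node of `T` is replaced by a leaf
labeled with a most frequent label of the examples reaching it. -/
def ReplStep {ι : Type} (E : Finset (ι → ℝ)) (lab : (ι → ℝ) → Label)
    (T T' : DTree ι) : Prop :=
  ∃ p, T.IsInnerPos p ∧
    T' = T.replaceAt p (.leaf (majorityLabel (reach E T p) lab))

/-- `T` is a reasonable decision tree for `(E, lab)`: every node is reached by some
example and every leaf carries a most frequent label of the examples reaching it. -/
def Reasonable {ι : Type} (E : Finset (ι → ℝ)) (lab : (ι → ℝ) → Label)
    (T : DTree ι) : Prop :=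
  (∀ p, T.IsNodePos p → (reach E T p).Nonempty) ∧
  (∀ p c, T.subtreeAt p = some (.leaf c) → ∀ c' : Label,
    ((reach E T p).filter fun e => lab e = c').card ≤
      ((reach E T p).filter fun e => lab e = c).card)

/-- Apply a sequence of raising operations (given by positions and kept directions). -/
def applySeq {ι : Type} : DTree ι → List (List Bool × Bool) → DTree ι
  | T, [] => T
  | T, (q, b) :: rest => applySeq (T.raiseAt q b) rest

/-- Each raising operation of the sequence is applied at an inner node. -/
def ValidSeq {ι : Type} : DTree ι → List (List Bool × Bool) → Prop
  | _, [] => True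
  | T, (q, b) :: rest => T.IsInnerPos q ∧ ValidSeq (T.raiseAt q b) rest

/-- The total number of inner nodes pruned by a sequence of raising operations. -/
def seqPruned {ι : Type} : DTree ι → List (List Bool × Bool) → ℕ
  | _, [] => 0
  | T, (q, b) :: rest =>
      (match T.subtreeAt q with
        | some (.node _ _ l r) => 1 + DTree.innerCount (if b then l else r)
        | _ => 0) + seqPruned (T.raiseAt q b) rest

/-- `T'` is obtained from `T` by a (possibly empty) sequence of subtree raising
operations. -/
def RaisedFrom {ι : Type} (T T' : DTree ι) : Prop :=
  ∃ steps, ValidSeq T steps ∧ applySeq T steps = T'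

/-- `T'` is obtained from `T` by a sequence of subtree raising operations pruning
exactly `m` inner nodes in total. -/
def RaisedFromPruning {ι : Type} (T : DTree ι) (m : ℕ) (T' : DTree ι) : Prop :=
  ∃ steps, ValidSeq T steps ∧ seqPruned T steps = m ∧ applySeq T steps = T'

/-- Tracking the position of a node through one raising operation: nodes strictly
below the raised node on the discarded side, and the raised node itself, are pruned
(`none`); all other nodes survive at a possibly shifted position. -/
def stepMap (q : List Bool) (b : Bool) (p : List Bool) : Option (List Bool) :=
  if q <+: p then
    if q ++ [b] <+: p then some (q ++ p.drop (q.length + 1)) else none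
  else some p

/-- Tracking the position of a node through a sequence of raising operations. -/
def seqMap : List (List Bool × Bool) → List Bool → Option (List Bool)
  | [], p => some p
  | (q, b) :: rest, p => (stepMap q b p).bind (seqMap rest)

/-- The number of errors of `T` on a multiset of labeled examples. -/
noncomputable def errCountM {ι : Type} (T : DTree ι) (E : Multiset ((ι → ℝ) × Label)) : ℕ :=
  (E.filter fun q => T.classify q.1 ≠ q.2).card

/-- The cut at position `v.take j` on the path from the root of `T` to `v` is a
left-cut in feature `i` (the child taken on the path is the right child) that is
counted: its threshold is strictly greater than the threshold of every left-cut in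
feature `i` on the path from the root of `T'` to `v'` (all left-cuts are counted
if that path has no left-cut in feature `i`). -/
def CountedL {ι : Type} (T T' : DTree ι) (v v' : List Bool) (i : ι) (j : ℕ) : Prop :=
  j < v.length ∧ v.getD j false = true ∧
  ∃ t : ℝ, T.cutAt (v.take j) = some (i, t) ∧
    ∀ j' < v'.length, v'.getD j' false = true →
      ∀ t' : ℝ, T'.cutAt (v'.take j') = some (i, t') → t' < t

/-- The cut at position `v.take j` is a counted right-cut in feature `i`: the child
taken on the path is the left child, and its threshold is strictly smaller than the
threshold of every right-cut in feature `i` on the path from the root of `T'`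
to `v'`. -/
def CountedR {ι : Type} (T T' : DTree ι) (v v' : List Bool) (i : ι) (j : ℕ) : Prop :=
  j < v.length ∧ v.getD j false = false ∧
  ∃ t : ℝ, T.cutAt (v.take j) = some (i, t) ∧
    ∀ j' < v'.length, v'.getD j' false = false →
      ∀ t' : ℝ, T'.cutAt (v'.take j') = some (i, t') → t < t'

/-!
Follow a node `v` through the sequence. A single raising operation either leaves its position
alone or deletes exactly one node `q` from the path to it, so on surviving nodes the operation
preserves the ancestor relation in both directions, the side on which a descendant lies, and every
feature and threshold. Hence a left- or right-cut on `P` that survives is a cut on `P'` of the same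
kind, feature and threshold, while the threshold of a counted cut differs from all of those.
For the bound, `P'` has at most one node less than `P` per operation, every operation prunes at
least one inner node, and each node of `P` is a cut in one feature and one direction only.
-/

theorem concat_prefix_iff_getD {α : Type*} {u v : List α} {a : α} (d : α) :
    u ++ [a] <+: v ↔ u.length < v.length ∧ v.getD u.length d = a ∧ v.take u.length = u := by
  constructor
  · rintro ⟨w, rfl⟩
    simp
  · rintro ⟨hlt, rfl, htake⟩
    rw [List.getD_eq_getElem _ _ hlt]
    nth_rewrite 1 [← htake]
    rw [List.take_append_getElem]
    exact List.take_prefix _ _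

theorem prefix_append_iff_of_not_prefix {α : Type*} {u q : List α} (h : ¬ q <+: u) (w : List α) :
    u <+: q ++ w ↔ u <+: q :=
  ⟨fun hu => (List.prefix_or_prefix_of_prefix hu (List.prefix_append q w)).resolve_right h,
    fun hu => hu.trans (List.prefix_append q w)⟩

theorem concat_prefix_append_iff_of_not_prefix {α : Type*} {u q : List α} (h : ¬ q <+: u) (c : α)
    (w : List α) : u ++ [c] <+: q ++ w ↔ u ++ [c] <+: q := by
  by_cases hq : q <+: u ++ [c]
  · obtain rfl : q = u ++ [c] := (List.prefix_concat_iff.1 hq).resolve_right h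
    simp
  · exact prefix_append_iff_of_not_prefix hq w

section Positions

variable {q u u' v v' : List Bool} {b c : Bool} {steps : List (List Bool × Bool)}

theorem stepMap_eq_some_iff :
    stepMap q b u = some u' ↔ (¬ q <+: u ∧ u' = u) ∨ ∃ x, u = q ++ b :: x ∧ u' = q ++ x := by
  unfold stepMap
  split_ifs with hq hqb
  · obtain ⟨x, rfl⟩ := hqb
    simp [List.drop_append, List.drop_of_length_le, eq_comm]
  · simp only [hq, not_true_eq_false, false_and, false_or, false_iff]
    rintro ⟨x, rfl, -⟩
    exact hqb ⟨x, by simp⟩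
  · have hne (x : List Bool) : u ≠ q ++ b :: x := fun h => hq ⟨b :: x, h.symm⟩
    simp [hq, hne, eq_comm]

theorem exists_stepMap_eq_some (q : List Bool) (b : Bool) (u' : List Bool) :
    ∃ u, stepMap q b u = some u' := by
  by_cases hq : q <+: u'
  · obtain ⟨x, rfl⟩ := hq
    exact ⟨q ++ b :: x, stepMap_eq_some_iff.2 (.inr ⟨x, rfl, rfl⟩)⟩
  · exact ⟨u', stepMap_eq_some_iff.2 (.inl ⟨hq, rfl⟩)⟩

theorem stepMap_prefix_iff (hu : stepMap q b u = some u') (hv : stepMap q b v = some v') :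
    u' <+: v' ↔ u <+: v := by
  rcases stepMap_eq_some_iff.1 hu with ⟨hqu, rfl⟩ | ⟨x, rfl, rfl⟩ <;>
    rcases stepMap_eq_some_iff.1 hv with ⟨hqv, rfl⟩ | ⟨y, rfl, rfl⟩
  · rfl
  · rw [prefix_append_iff_of_not_prefix hqu, prefix_append_iff_of_not_prefix hqu]
  · exact iff_of_false (fun h => hqv ((List.prefix_append _ _).trans h))
      fun h => hqv ((List.prefix_append _ _).trans h)
  · simp

theorem stepMap_concat_prefix_iff (hu : stepMap q b u = some u') (hv : stepMap q b v = some v') :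
    u' ++ [c] <+: v' ↔ u ++ [c] <+: v := by
  rcases stepMap_eq_some_iff.1 hu with ⟨hqu, rfl⟩ | ⟨x, rfl, rfl⟩ <;>
    rcases stepMap_eq_some_iff.1 hv with ⟨hqv, rfl⟩ | ⟨y, rfl, rfl⟩
  · rfl
  · rw [concat_prefix_append_iff_of_not_prefix hqu, concat_prefix_append_iff_of_not_prefix hqu]
  · simp only [List.append_assoc]
    exact iff_of_false (fun h => hqv ((List.prefix_append _ _).trans h))
      fun h => hqv ((List.prefix_append _ _).trans h)
  · simp

theorem length_le_of_stepMap (hv : stepMap q b v = some v') : v.length ≤ v'.length + 1 := by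
  rcases stepMap_eq_some_iff.1 hv with ⟨-, rfl⟩ | ⟨x, rfl, rfl⟩
  · exact Nat.le_succ _
  · simp [Nat.add_assoc]

theorem seqMap_cons_eq_some_iff {s : List Bool × Bool} :
    seqMap (s :: steps) u = some u' ↔ ∃ w, stepMap s.1 s.2 u = some w ∧ seqMap steps w = some u' :=
  Option.bind_eq_some_iff

theorem exists_seqMap_eq_some (steps : List (List Bool × Bool)) (u' : List Bool) :
    ∃ u, seqMap steps u = some u' := by
  induction steps with
  | nil => exact ⟨u', rfl⟩
  | cons s steps ih =>
    obtain ⟨w, hw⟩ := ih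
    obtain ⟨u, hu⟩ := exists_stepMap_eq_some s.1 s.2 w
    exact ⟨u, seqMap_cons_eq_some_iff.2 ⟨w, hu, hw⟩⟩

theorem seqMap_prefix_iff (hu : seqMap steps u = some u') (hv : seqMap steps v = some v') :
    u' <+: v' ↔ u <+: v := by
  induction steps generalizing u v with
  | nil => simp_all [seqMap]
  | cons s steps ih =>
    obtain ⟨w, hw, hu⟩ := seqMap_cons_eq_some_iff.1 hu
    obtain ⟨z, hz, hv⟩ := seqMap_cons_eq_some_iff.1 hv
    exact (ih hu hv).trans (stepMap_prefix_iff hw hz)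

theorem seqMap_concat_prefix_iff (hu : seqMap steps u = some u') (hv : seqMap steps v = some v') :
    u' ++ [c] <+: v' ↔ u ++ [c] <+: v := by
  induction steps generalizing u v with
  | nil => simp_all [seqMap]
  | cons s steps ih =>
    obtain ⟨w, hw, hu⟩ := seqMap_cons_eq_some_iff.1 hu
    obtain ⟨z, hz, hv⟩ := seqMap_cons_eq_some_iff.1 hv
    exact (ih hu hv).trans (stepMap_concat_prefix_iff hw hz)

theorem length_le_of_seqMap (hv : seqMap steps v = some v') :
    v.length ≤ v'.length + steps.length := by
  induction steps generalizing v with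
  | nil => simp_all [seqMap]
  | cons s steps ih =>
    obtain ⟨z, hz, hv⟩ := seqMap_cons_eq_some_iff.1 hv
    grind [length_le_of_stepMap hz, ih hv]

end Positions

namespace DTree

variable {ι : Type} {T : DTree ι} {q u u' v v' : List Bool} {b b' : Bool} {i i' : ι} {t t' : ℝ}
  {steps : List (List Bool × Bool)}

theorem subtreeAt_append (T : DTree ι) (q x : List Bool) :
    T.subtreeAt (q ++ x) = (T.subtreeAt q).bind (·.subtreeAt x) := by
  induction q generalizing T with
  | nil => simp [subtreeAt]
  | cons c q ih =>
    cases T with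
    | leaf => rfl
    | node f t l r => exact ih _

theorem subtreeAt_replaceAt_append (hq : T.IsNodePos q) (S : DTree ι) (x : List Bool) :
    (T.replaceAt q S).subtreeAt (q ++ x) = S.subtreeAt x := by
  induction q generalizing T with
  | nil => simp [replaceAt]
  | cons c q ih =>
    cases T with
    | leaf => simp [IsNodePos, subtreeAt] at hq
    | node f t l r => cases c <;> exact ih hq

theorem cutAt_replaceAt_of_not_prefix (T S : DTree ι) (h : ¬ q <+: u) :
    (T.replaceAt q S).cutAt u = T.cutAt u := by
  induction q generalizing T u with
  | nil => simp at h
  | cons c q ih =>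
    cases T with
    | leaf => rfl
    | node f t l r =>
      cases u with
      | nil => cases c <;> rfl
      | cons e u =>
        rw [List.cons_prefix_cons, not_and] at h
        cases c <;> cases e <;> first | rfl | exact ih _ (h rfl)

theorem cutAt_raiseAt_of_stepMap (hq : T.IsInnerPos q) (hu : stepMap q b u = some u') :
    (T.raiseAt q b).cutAt u' = T.cutAt u := by
  obtain ⟨f, t, l, r, hq⟩ := hq
  have hnode : T.IsNodePos q := by simp [IsNodePos, hq]
  simp only [raiseAt, hq]
  rcases stepMap_eq_some_iff.1 hu with ⟨hqu, rfl⟩ | ⟨x, rfl, rfl⟩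
  · exact cutAt_replaceAt_of_not_prefix _ _ hqu
  · simp only [cutAt, subtreeAt_replaceAt_append hnode, subtreeAt_append T, hq, Option.bind_some,
      subtreeAt]

theorem cutAt_applySeq_of_seqMap (hval : ValidSeq T steps) (hu : seqMap steps u = some u') :
    (applySeq T steps).cutAt u' = T.cutAt u := by
  induction steps generalizing T u with
  | nil => simp_all [seqMap, applySeq]
  | cons s steps ih =>
    obtain ⟨w, hw, hu⟩ := seqMap_cons_eq_some_iff.1 hu
    exact (ih hval.2 hu).trans (cutAt_raiseAt_of_stepMap hval.1 hw)

/-- The node `u` is a cut in feature `i` with threshold `t` on the path from the root of `T` to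
`v`: a left-cut if `b = true`, a right-cut if `b = false`. The direction `b` is that of the child
taken on the path, hence opposite to the name of the cut. -/
def IsPathCut (T : DTree ι) (v : List Bool) (b : Bool) (i : ι) (t : ℝ) (u : List Bool) : Prop :=
  u ++ [b] <+: v ∧ T.cutAt u = some (i, t)

theorem IsPathCut.applySeq_of_seqMap (h : T.IsPathCut v b i t u) (hval : ValidSeq T steps)
    (hv : seqMap steps v = some v') (hu : seqMap steps u = some u') :
    (applySeq T steps).IsPathCut v' b i t u' :=
  ⟨(seqMap_concat_prefix_iff hu hv).2 h.1, (cutAt_applySeq_of_seqMap hval hu).trans h.2⟩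

theorem IsPathCut.seqMap_eq_none (h : T.IsPathCut v b i t u) (hval : ValidSeq T steps)
    (hv : seqMap steps v = some v') (hnew : ∀ u', ¬ (applySeq T steps).IsPathCut v' b i t u') :
    seqMap steps u = none :=
  Option.eq_none_iff_forall_ne_some.2 fun u' hu => hnew u' (h.applySeq_of_seqMap hval hv hu)

end DTree

section Counting

variable {ι : Type} {T T' : DTree ι} {v v' : List Bool} {i : ι} {j : ℕ}
  {steps : List (List Bool × Bool)}

theorem CountedL.exists_isPathCut (h : CountedL T T' v v' i j) :
    ∃ t, T.IsPathCut v true i t (v.take j) ∧ ∀ u', ¬ T'.IsPathCut v' true i t u' := by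
  obtain ⟨hj, hdir, t, hcut, hmax⟩ := h
  refine ⟨t, ⟨(concat_prefix_iff_getD false).2 ?_, hcut⟩, fun u' ⟨hu', hcut'⟩ => ?_⟩
  · simpa [hj.le] using ⟨hj, hdir⟩
  · obtain ⟨hlt, hdir', htake⟩ := (concat_prefix_iff_getD false).1 hu'
    exact lt_irrefl t (hmax _ hlt hdir' t (htake.symm ▸ hcut'))

theorem CountedR.exists_isPathCut (h : CountedR T T' v v' i j) :
    ∃ t, T.IsPathCut v false i t (v.take j) ∧ ∀ u', ¬ T'.IsPathCut v' false i t u' := by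
  obtain ⟨hj, hdir, t, hcut, hmin⟩ := h
  refine ⟨t, ⟨(concat_prefix_iff_getD false).2 ?_, hcut⟩, fun u' ⟨hu', hcut'⟩ => ?_⟩
  · simpa [hj.le] using ⟨hj, hdir⟩
  · obtain ⟨hlt, hdir', htake⟩ := (concat_prefix_iff_getD false).1 hu'
    exact lt_irrefl t (hmin _ hlt hdir' t (htake.symm ▸ hcut'))

theorem CountedL.seqMap_take_eq_none (h : CountedL T (applySeq T steps) v v' i j)
    (hval : ValidSeq T steps) (hv : seqMap steps v = some v') :
    seqMap steps (v.take j) = none := by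
  obtain ⟨t, hcut, hnew⟩ := h.exists_isPathCut
  exact hcut.seqMap_eq_none hval hv hnew

theorem CountedR.seqMap_take_eq_none (h : CountedR T (applySeq T steps) v v' i j)
    (hval : ValidSeq T steps) (hv : seqMap steps v = some v') :
    seqMap steps (v.take j) = none := by
  obtain ⟨t, hcut, hnew⟩ := h.exists_isPathCut
  exact hcut.seqMap_eq_none hval hv hnew

/-- The pruned nodes other than `v` on the path from the root to `v`, each given by its depth. -/
def prunedDepths (steps : List (List Bool × Bool)) (v : List Bool) : Finset ℕ :=
  {j ∈ Finset.range v.length | seqMap steps (v.take j) = none}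

theorem length_le_card_survivors (hv : seqMap steps v = some v') :
    v'.length ≤ {j ∈ Finset.range v.length | seqMap steps (v.take j) ≠ none}.card := by
  rw [← Finset.card_range v'.length]
  -- Each proper ancestor of `v'` is the new position of a proper ancestor of `v`.
  refine Finset.card_le_card_of_surjOn (fun j => ((seqMap steps (v.take j)).getD []).length) ?_
  intro j' hj'
  have hj' : j' < v'.length := by simpa using hj'
  obtain ⟨u, hu⟩ := exists_seqMap_eq_some steps (v'.take j')
  have huv : u <+: v := (seqMap_prefix_iff hu hv).1 (List.take_prefix _ _)
  have hlt : u.length < v.length := by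
    refine lt_of_le_of_ne huv.length_le fun hlen => ?_
    obtain rfl := huv.eq_of_length hlen
    have := congrArg List.length (Option.some_injective _ (hu.symm.trans hv))
    grind
  have htake : v.take u.length = u := (List.prefix_iff_eq_take.1 huv).symm
  exact ⟨u.length, by simp [hlt, htake, hu], by simp [htake, hu, hj'.le]⟩

theorem card_prunedDepths_le_length (hv : seqMap steps v = some v') :
    (prunedDepths steps v).card ≤ steps.length := by
  have hsplit : (prunedDepths steps v).card
      + {j ∈ Finset.range v.length | seqMap steps (v.take j) ≠ none}.card = v.length :=
    (Finset.card_filter_add_card_filter_not _).trans (Finset.card_range _)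
  have hsurv := length_le_card_survivors hv
  have hlen := length_le_of_seqMap hv
  omega

theorem ValidSeq.length_le_seqPruned (hval : ValidSeq T steps) :
    steps.length ≤ seqPruned T steps := by
  induction steps generalizing T with
  | nil => exact Nat.zero_le _
  | cons s steps ih =>
    obtain ⟨⟨f, t, l, r, hq⟩, hval⟩ := hval
    simp only [seqPruned, hq, List.length_cons]
    rw [Nat.add_comm]
    exact Nat.add_le_add (Nat.le_add_right 1 _) (ih hval)

open Classical in
theorem card_countedL_add_card_countedR_le (hval : ValidSeq T steps)
    (hv : seqMap steps v = some v') (i : ι) :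
    ((Finset.range v.length).filter fun j => CountedL T (applySeq T steps) v v' i j).card
      + ((Finset.range v.length).filter fun j => CountedR T (applySeq T steps) v v' i j).card
      ≤ {j ∈ prunedDepths steps v | (T.cutAt (v.take j)).map Prod.fst = some i}.card := by
  rw [← Finset.card_union_of_disjoint, ← Finset.filter_or]
  · refine Finset.card_le_card fun j hj => ?_
    obtain ⟨hj, hcount⟩ := Finset.mem_filter.1 hj
    simp only [prunedDepths, Finset.mem_filter]
    rcases hcount with h | h <;> obtain ⟨t, ⟨-, hcut⟩, -⟩ := h.exists_isPathCut <;>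
      exact ⟨⟨hj, h.seqMap_take_eq_none hval hv⟩, by simp [hcut]⟩
  · exact Finset.disjoint_filter.2 fun j _ hL hR => Bool.noConfusion (hL.2.1.symm.trans hR.2.1)

open Classical in
theorem sum_card_counted_le_card_prunedDepths (hval : ValidSeq T steps)
    (hv : seqMap steps v = some v') (s : Finset ι) :
    ∑ i ∈ s,
      (((Finset.range v.length).filter fun j => CountedL T (applySeq T steps) v v' i j).card
        + ((Finset.range v.length).filter fun j => CountedR T (applySeq T steps) v v' i j).card)
      ≤ (prunedDepths steps v).card := by
  let feature (j : ℕ) : Option ι := (T.cutAt (v.take j)).map Prod.fst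
  calc
    _ ≤ ∑ i ∈ s, {j ∈ prunedDepths steps v | feature j = some i}.card :=
      Finset.sum_le_sum fun i _ => card_countedL_add_card_countedR_le hval hv i
    _ = ∑ o ∈ s.map .some, {j ∈ prunedDepths steps v | feature j = o}.card :=
      (Finset.sum_map s .some fun o => {j ∈ prunedDepths steps v | feature j = o}.card).symm
    _ = {j ∈ prunedDepths steps v | feature j ∈ s.map .some}.card :=
      Finset.sum_card_fiberwise_eq_card_filter _ _ _
    _ ≤ (prunedDepths steps v).card := Finset.card_filter_le _ _

end Counting

open Classical in
theorem stmt6_general {ι : Type} (T : DTree ι) (steps : List (List Bool × Bool))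
    (hval : ValidSeq T steps) (v : List Bool) (_hv : T.IsNodePos v)
    (v' : List Bool) (hsurv : seqMap steps v = some v') :
    (∀ u u', seqMap steps u = some u' → u' <+: v' → u <+: v)
    ∧ (∀ u, u <+: v → u ≠ v →
        ¬ (∃ u', seqMap steps u = some u' ∧ u' <+: v') → seqMap steps u = none)
    ∧ (∀ (i : ι) (j : ℕ), CountedL T (applySeq T steps) v v' i j →
        seqMap steps (v.take j) = none)
    ∧ (∀ (i : ι) (j : ℕ), CountedR T (applySeq T steps) v v' i j →
        seqMap steps (v.take j) = none)
    ∧ ∀ s : Finset ι, (∑ i ∈ s,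
        (((Finset.range v.length).filter
            (fun j => CountedL T (applySeq T steps) v v' i j)).card
          + ((Finset.range v.length).filter
            (fun j => CountedR T (applySeq T steps) v v' i j)).card)) ≤ steps.length := by
  refine ⟨fun u u' hu => (seqMap_prefix_iff hu hsurv).1, fun u huv _ hnot => ?_,
    fun i j h => h.seqMap_take_eq_none hval hsurv,
    fun i j h => h.seqMap_take_eq_none hval hsurv, fun s => ?_⟩
  · exact Option.eq_none_iff_forall_ne_some.2 fun u' hu =>
      hnot ⟨u', hu, (seqMap_prefix_iff hu hsurv).2 huv⟩
  · exact (sum_card_counted_le_card_prunedDepths hval hsurv s).trans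
      (card_prunedDepths_le_length hsurv)

open Classical in
/-- Let `T'` be obtained from `T` by raising operations pruning
exactly `m` inner nodes, and let `v` be a node of `T` surviving at position `v'`
in `T'`. Then the path `P'` from the root of `T'` to `v` consists of surviving
nodes of the path `P` from the root of `T` to `v`; every node of `P` other than `v`
that is not on `P'` is pruned; every counted left- or right-cut (whose threshold
beats all corresponding cuts on `P'` in its feature) is pruned; and in particular
the total number of counted cuts is at most `m`. -/
theorem stmt6 {d : ℕ} (T : DTree (Fin d)) (steps : List (List Bool × Bool))
    (hval : ValidSeq T steps) (m : ℕ) (hm : seqPruned T steps = m)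
    (v : List Bool) (hv : T.IsNodePos v)
    (v' : List Bool) (hsurv : seqMap steps v = some v') :
    (∀ u u', seqMap steps u = some u' → u' <+: v' → u <+: v)
    ∧ (∀ u, u <+: v → u ≠ v →
        ¬ (∃ u', seqMap steps u = some u' ∧ u' <+: v') → seqMap steps u = none)
    ∧ (∀ (i : Fin d) (j : ℕ), CountedL T (applySeq T steps) v v' i j →
        seqMap steps (v.take j) = none)
    ∧ (∀ (i : Fin d) (j : ℕ), CountedR T (applySeq T steps) v v' i j →
        seqMap steps (v.take j) = none)
    ∧ (∑ i : Fin d,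
        (((Finset.range v.length).filter
            (fun j => CountedL T (applySeq T steps) v v' i j)).card
          + ((Finset.range v.length).filter
            (fun j => CountedR T (applySeq T steps) v v' i j)).card)) ≤ m := by
  obtain ⟨hpath, hpruned, hL, hR, hsum⟩ := stmt6_general T steps hval v hv v' hsurv
  exact ⟨hpath, hpruned, hL, hR, hm ▸ (hsum Finset.univ).trans hval.length_le_seqPruned⟩
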